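/- Let A be a finite abelian group, m ≥ 1, and let ρ, ρ' : A →* Matrix.unitaryGroup (Fin m) ℂ be group homomorphisms. Then there exists v ∈ Matrix.unitaryGroup (Fin m) ℂ with v * ρ a * v⁻¹ = ρ' a for every a ∈ A if and only if the traces agree pointwise, i.e. Matrix.trace (ρ a) = Matrix.trace (ρ' a) for every a ∈ A. In other words, conjugacy classes of homomorphisms from a finite abelian group to the unitary group are determined by their characters. -/

import Mathlib

open Module in
theorem urc_exists_basis {G : Type*} [AddCommGroup G] [Fintype G] {m : ℕ}
    (T : G → EuclideanSpace ℂ (Fin m) →ₗ[ℂ] EuclideanSpace ℂ (Fin m))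
    (h0 : ∀ x, T 0 x = x) (hadd : ∀ a b x, T (a + b) x = T a (T b x))
    (hin : ∀ a x y, inner ℂ (T a x) (T a y) = inner ℂ x y) :
    ∃ (b : OrthonormalBasis (Fin m) ℂ (EuclideanSpace ℂ (Fin m)))
      (χ : Fin m → AddChar G ℂ), ∀ a i, T a (b i) = χ i a • b i := by
  classical
  let V : AddChar G ℂ → Submodule ℂ (EuclideanSpace ℂ (Fin m)) :=
    fun χ => ⨅ a, End.eigenspace (T a) (χ a)
  have hmem : ∀ χ x, x ∈ V χ ↔ ∀ a, T a x = χ a • x := by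
    intro χ x
    simp [V, Submodule.mem_iInf, End.mem_eigenspace_iff]
  have horth : OrthogonalFamily ℂ (fun χ => V χ) fun χ => (V χ).subtypeₗᵢ := by
    rw [OrthogonalFamily]
    intro χ ψ hne x y
    by_contra hxy
    apply hne
    ext a
    have h := hin a x y
    rw [(hmem χ x).1 x.2 a, (hmem ψ y).1 y.2 a, inner_smul_left, inner_smul_right,
      ← mul_assoc] at h
    have h1 := mul_right_cancel₀ (b := inner ℂ (x : EuclideanSpace ℂ (Fin m)) y) hxy
      (h.trans (one_mul _).symm)
    have h2 : (starRingEnd ℂ) (χ a) * χ a = 1 := by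
      rw [← AddChar.map_neg_eq_conj, ← AddChar.map_add_eq_mul]; simp
    have h3 : (starRingEnd ℂ) (χ a) ≠ 0 := left_ne_zero_of_mul_eq_one h2
    exact mul_left_cancel₀ h3 (h2.trans h1.symm)
  have hcard : (Fintype.card G : ℂ) ≠ 0 := by simp
  have htop : iSup V = ⊤ := by
    rw [eq_top_iff]
    intro x _
    have hP : ∀ χ : AddChar G ℂ, ∑ a, χ (-a) • T a x ∈ V χ := by
      intro χ
      rw [hmem]
      intro c
      rw [map_sum, Finset.smul_sum]
      refine Fintype.sum_equiv (Equiv.addLeft c) _ _ fun a => ?_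
      simp only [map_smul, Equiv.coe_addLeft, hadd, smul_smul]
      rw [← AddChar.map_add_eq_mul]
      congr 2
      abel
    have hs : ∑ χ : AddChar G ℂ, ∑ a, χ (-a) • T a x = (Fintype.card G : ℂ) • x := by
      rw [Finset.sum_comm]
      simp_rw [← Finset.sum_smul, AddChar.sum_apply_eq_ite]
      simp [h0]
    have : x = (Fintype.card G : ℂ)⁻¹ • ∑ χ : AddChar G ℂ, ∑ a, χ (-a) • T a x := by
      rw [hs, smul_smul, inv_mul_cancel₀ hcard, one_smul]
    rw [this]
    exact Submodule.smul_mem _ _ (Submodule.sum_mem _ fun χ _ =>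
      (le_iSup V χ) (hP χ))
  have hint : DirectSum.IsInternal V := by
    rw [horth.isInternal_iff, htop, Submodule.top_orthogonal_eq_bot]
  have hn : finrank ℂ (EuclideanSpace ℂ (Fin m)) = m := by simp
  exact ⟨hint.subordinateOrthonormalBasis hn horth,
    fun i => hint.subordinateOrthonormalBasisIndex hn i horth,
    fun a i => (hmem _ _).1 (hint.subordinateOrthonormalBasis_subordinate hn i horth) a⟩

theorem urc_perm {X : Type*} [DecidableEq X] {m : ℕ} (f g : Fin m → X)
    (h : ∀ x, Finset.card {i | f i = x} = Finset.card {i | g i = x}) :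
    ∃ σ : Fin m ≃ Fin m, ∀ i, g (σ i) = f i := by
  have e : ∀ x, Nonempty ({i // f i = x} ≃ {i // g i = x}) := fun x =>
    Fintype.card_eq.1 (by rw [Fintype.card_subtype, Fintype.card_subtype]; exact h x)
  replace e := fun x => (e x).some
  refine ⟨(Equiv.sigmaFiberEquiv f).symm.trans
    ((Equiv.sigmaCongrRight e).trans (Equiv.sigmaFiberEquiv g)), fun i => ?_⟩
  exact (e (f i) ⟨i, rfl⟩).2

theorem urc_chars {G : Type*} [AddCommGroup G] [Fintype G] {m : ℕ}
    (χ ψ : Fin m → AddChar G ℂ) (h : ∀ a, ∑ i, χ i a = ∑ i, ψ i a) :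
    ∃ σ : Fin m ≃ Fin m, ∀ i, ψ (σ i) = χ i := by
  classical
  apply urc_perm
  intro θ
  have key : ∀ (f : Fin m → AddChar G ℂ) (a : G), ∑ i, f i a =
      ∑ θ : AddChar G ℂ, (Finset.card {i | f i = θ} : ℂ) * θ a := by
    intro f a
    rw [← Finset.sum_fiberwise Finset.univ f]
    refine Finset.sum_congr rfl fun θ _ => ?_
    rw [Finset.sum_congr rfl (g := fun _ => θ a), Finset.sum_const, nsmul_eq_mul]
    intro i hi
    rw [(Finset.mem_filter.1 hi).2]
  have hli := Fintype.linearIndependent_iff.1 (AddChar.linearIndependent G ℂ)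
    (fun θ => (Finset.card {i | χ i = θ} : ℂ) - (Finset.card {i | ψ i = θ} : ℂ)) (by
      ext a
      have := h a
      rw [key χ, key ψ] at this
      simp [sub_mul, this]) θ
  exact_mod_cast sub_eq_zero.1 hli

/-- The unitary matrix whose columns are the vectors of an orthonormal basis. -/
noncomputable def urcU {m : ℕ} (b : OrthonormalBasis (Fin m) ℂ (EuclideanSpace ℂ (Fin m))) :
    Matrix.unitaryGroup (Fin m) ℂ :=
  ⟨(EuclideanSpace.basisFun (Fin m) ℂ).toBasis.toMatrix b.toBasis,
    (EuclideanSpace.basisFun (Fin m) ℂ).toMatrix_orthonormalBasis_mem_unitary b⟩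

theorem urc_diag {m : ℕ} (b : OrthonormalBasis (Fin m) ℂ (EuclideanSpace ℂ (Fin m)))
    (M : Matrix (Fin m) (Fin m) ℂ) (d : Fin m → ℂ)
    (h : ∀ i, Matrix.toEuclideanLin M (b i) = d i • b i) :
    M * (urcU b : Matrix (Fin m) (Fin m) ℂ) = urcU b * Matrix.diagonal d := by
  ext i j
  rw [Matrix.mul_diagonal]
  have := congrArg (fun v : EuclideanSpace ℂ (Fin m) => v i) (h j)
  simp only [Matrix.ofLp_toEuclideanLin_apply, PiLp.smul_apply, smul_eq_mul] at this
  have hu : ∀ k l, (urcU b : Matrix (Fin m) (Fin m) ℂ) k l = b l k := fun k l => rfl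
  rw [hu, mul_comm, ← this]
  rfl

theorem urc_trace {m : ℕ} (u : Matrix.unitaryGroup (Fin m) ℂ)
    (M N : Matrix (Fin m) (Fin m) ℂ) (h : M * (u : Matrix (Fin m) (Fin m) ℂ) = u * N) :
    M.trace = N.trace := by
  have h1 : (u : Matrix (Fin m) (Fin m) ℂ) * star (u : Matrix (Fin m) (Fin m) ℂ) = 1 :=
    Unitary.coe_mul_star_self u
  have h2 : star (u : Matrix (Fin m) (Fin m) ℂ) * (u : Matrix (Fin m) (Fin m) ℂ) = 1 :=
    Unitary.coe_star_mul_self u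
  calc M.trace = (M * (u * star (u : Matrix (Fin m) (Fin m) ℂ))).trace := by rw [h1, mul_one]
    _ = (u * N * star (u : Matrix (Fin m) (Fin m) ℂ)).trace := by rw [← mul_assoc, h]
    _ = N.trace := by rw [Matrix.trace_mul_comm, ← mul_assoc, h2, one_mul]

theorem urc_rep {A : Type*} [CommGroup A] [Fintype A] {m : ℕ}
    (ρ : A →* Matrix.unitaryGroup (Fin m) ℂ) :
    ∃ (b : OrthonormalBasis (Fin m) ℂ (EuclideanSpace ℂ (Fin m)))
      (χ : Fin m → AddChar (Additive A) ℂ), ∀ (a : Additive A) i,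
      Matrix.toEuclideanLin (ρ a.toMul : Matrix (Fin m) (Fin m) ℂ) (b i) = χ i a • b i := by
  apply urc_exists_basis (fun a : Additive A =>
    Matrix.toEuclideanLin (ρ a.toMul : Matrix (Fin m) (Fin m) ℂ))
  · intro x
    simp [Matrix.toEuclideanLin_apply]
  · intro a b x
    simp [Matrix.toEuclideanLin_apply]
  · intro a x y
    rw [← LinearMap.adjoint_inner_right, ← Matrix.toEuclideanLin_conjTranspose_eq_adjoint]
    congr 1
    have h2 := Unitary.coe_star_mul_self (ρ a.toMul)
    rw [Matrix.star_eq_conjTranspose] at h2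
    simp [Matrix.toEuclideanLin_apply, h2]

/-- Two homomorphisms from a finite abelian group `A` to the unitary
group are conjugate by a unitary matrix if and only if their characters (traces) agree
pointwise. -/
theorem unitary_rep_conj_iff_trace_eq
    {A : Type*} [CommGroup A] [Fintype A] (m : ℕ) (hm : 1 ≤ m)
    (ρ ρ' : A →* Matrix.unitaryGroup (Fin m) ℂ) :
    (∃ v : Matrix.unitaryGroup (Fin m) ℂ, ∀ a : A, v * ρ a * v⁻¹ = ρ' a) ↔
      ∀ a : A,
        Matrix.trace ((ρ a : Matrix (Fin m) (Fin m) ℂ)) =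
          Matrix.trace ((ρ' a : Matrix (Fin m) (Fin m) ℂ)) := by
  constructor
  · rintro ⟨v, hv⟩ a
    refine (urc_trace v _ _ ?_).symm
    have : ρ' a * v = v * ρ a := by rw [← hv a]; group
    exact congrArg Subtype.val this
  · intro h
    obtain ⟨b, χ, hb⟩ := urc_rep ρ
    obtain ⟨b', χ', hb'⟩ := urc_rep ρ'
    have hd := fun a => urc_diag b _ _ (hb a)
    have hd' := fun a => urc_diag b' _ _ (hb' a)
    obtain ⟨σ, hσ⟩ := urc_chars χ χ' (fun a => by
      have h1 := urc_trace _ _ _ (hd a)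
      have h2 := urc_trace _ _ _ (hd' a)
      rw [Matrix.trace_diagonal] at h1 h2
      rw [← h1, ← h2, h])
    have hd2 := fun a : Additive A => urc_diag (b'.reindex σ.symm) (ρ' a.toMul)
      (fun i => χ i a) (fun i => by simp [hb' a, hσ])
    set u := urcU b
    set w := urcU (b'.reindex σ.symm)
    refine ⟨w * u⁻¹, fun a => ?_⟩
    have h1 : u⁻¹ * ρ a * u = w⁻¹ * ρ' a * w := by
      apply Subtype.ext
      have e1 := hd (Additive.ofMul a)
      have e2 := hd2 (Additive.ofMul a)
      simp only [toMul_ofMul] at e1 e2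
      have s1 : star (u : Matrix (Fin m) (Fin m) ℂ) * u = 1 := Unitary.coe_star_mul_self u
      have s2 : star (w : Matrix (Fin m) (Fin m) ℂ) * w = 1 := Unitary.coe_star_mul_self w
      change star (u : Matrix (Fin m) (Fin m) ℂ) * ρ a * u
        = star (w : Matrix (Fin m) (Fin m) ℂ) * ρ' a * w
      rw [mul_assoc, mul_assoc, e1, e2, ← mul_assoc, ← mul_assoc, s1, s2]
    calc w * u⁻¹ * ρ a * (w * u⁻¹)⁻¹ = w * (u⁻¹ * ρ a * u) * w⁻¹ := by group
      _ = ρ' a := by rw [h1]; group
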